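/- h_3(16) = 1; that is, the largest possible codimension of a cyclically covering subspace of 𝔽_3^{16} equals 1: there exists a cyclically covering subspace of 𝔽_3^{16} of codimension 1, but none of codimension 2. -/

import Mathlib

noncomputable section

/-- The cyclic shift operator on `Fin n → F`, sending `(a_0, …, a_{n-1})`
to `(a_{n-1}, a_0, …, a_{n-2})`. -/
def cshift (F : Type*) [Field F] (n : ℕ) : (Fin n → F) →ₗ[F] (Fin n → F) where
  toFun a := a ∘ (finRotate n).symm
  map_add' _ _ := rfl
  map_smul' _ _ := rfl

/-- A subspace `U ⊆ F^n` is cyclically covering if the union of its cyclic shifts is `F^n`. -/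
def IsCyclicallyCovering {F : Type*} [Field F] {n : ℕ} (U : Submodule F (Fin n → F)) : Prop :=
  ⋃ i ∈ Finset.range n, ⇑(cshift F n ^ i) '' (U : Set (Fin n → F)) = Set.univ

/-- `hcc F n` is the largest possible codimension of a cyclically covering subspace of `F^n`. -/
def hcc (F : Type*) [Field F] (n : ℕ) : ℕ :=
  sSup {k : ℕ | ∃ U : Submodule F (Fin n → F),
    IsCyclicallyCovering U ∧ n - Module.finrank F U = k}

/-!
Let `P : 𝔽_3[X] → Q` be the quotient map by a cyclically covering `U`, read through
`𝔽_3^16 ≅ 𝔽_3[X]/(X^16 - 1)`; every orbit of multiplication by `X` meets `ker P`, and the same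
holds for the restriction of `P` to the component of any factor of `X^16 - 1`. On the components of
`X^2 - 1` and `X^2 + 1` the restriction vanishes. The other irreducible factors are
`X^(2 * e) - ε X^e - 1` with `e = 1, 2` and `ε = ±1`; there `X^(4 * e) = -1`, so `4 * e` translates
of the kernel cover a field, and counting shows that the image is at most a line. If the
restriction is nonzero, then by nondegeneracy of multiplication it sends some orbit to any given
recurrent sequence, in particular to one which vanishes only at times `0, 1 mod 4`. Were the lines
of two coprime factors distinct, the sum of two such orbits, one delayed by `2`, would avoid
`ker P`. Hence all lines coincide and `codim U ≤ 1`.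

Conversely, four consecutive terms of a Fibonacci sequence over `𝔽_3` always include a zero.
-/

open Polynomial

section CyclicShift

variable {F : Type*} [Field F] {n : ℕ} [NeZero n]

open Fin.NatCast

lemma cshift_pow_apply (k : ℕ) (x : Fin n → F) (i : Fin n) :
    (cshift F n ^ k) x i = x (i - k) := by
  induction k generalizing i with
  | zero => simp
  | succ k ih =>
    rw [pow_succ', Module.End.mul_apply]
    change (cshift F n ^ k) x ((finRotate n).symm i) = _
    rw [finRotate_symm_apply, ih, sub_sub, Nat.cast_succ, add_comm]

lemma cshift_pow_self : cshift F n ^ n = 1 := by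
  ext x i
  simp [cshift_pow_apply]

lemma cshift_pow_single_zero (j : Fin n) :
    (cshift F n ^ (j : ℕ)) (Pi.single 0 1) = Pi.single j 1 := by
  ext i
  simp [cshift_pow_apply, Pi.single_apply, sub_eq_zero]

lemma isCyclicallyCovering_iff {U : Submodule F (Fin n → F)} :
    IsCyclicallyCovering U ↔ ∀ x, ∃ i : ℕ, (cshift F n ^ i) x ∈ U := by
  simp only [IsCyclicallyCovering, Set.eq_univ_iff_forall, Set.mem_iUnion, Finset.mem_range,
    Set.mem_image, SetLike.mem_coe, exists_prop]
  refine forall_congr' fun x => ⟨?_, ?_⟩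
  · rintro ⟨i, hi, y, hy, rfl⟩
    refine ⟨n - i, ?_⟩
    rwa [← Module.End.mul_apply, ← pow_add, Nat.sub_add_cancel hi.le, cshift_pow_self]
  · rintro ⟨i, hi⟩
    have hlt : i % n < n := Nat.mod_lt _ (NeZero.pos n)
    rw [pow_eq_pow_mod i cshift_pow_self] at hi
    refine ⟨(n - i % n) % n, Nat.mod_lt _ (NeZero.pos n), _, hi, ?_⟩
    rw [← pow_eq_pow_mod _ cshift_pow_self, ← Module.End.mul_apply, ← pow_add,
      Nat.sub_add_cancel hlt.le, cshift_pow_self, Module.End.one_apply]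

lemma sum_mul_cshift_pow {u : ℕ → F} (hu : Function.Periodic u n) (k : ℕ) (x : Fin n → F) :
    ∑ j : Fin n, u j * (cshift F n ^ k) x j = ∑ j : Fin n, u (j + k) * x j := by
  rw [← Equiv.sum_comp (Equiv.addRight (k : Fin n))]
  refine Finset.sum_congr rfl fun j _ => ?_
  rw [cshift_pow_apply, Equiv.coe_addRight, add_sub_cancel_right, Fin.val_add, Fin.val_natCast,
    Nat.add_mod_mod, hu.map_mod_nat]

/-- The identification of `F[X]/(X^n - 1)` with `F^n`, as a map on `F[X]`: it sends `g` to
`g(τ) e₀`, so that multiplication by `X` corresponds to the cyclic shift `τ`. -/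
def cyclicEval (F : Type*) [Field F] (n : ℕ) [NeZero n] : F[X] →ₗ[F] Fin n → F :=
  (aeval (cshift F n)).toLinearMap.flip (Pi.single 0 1)

lemma cyclicEval_mul (f g : F[X]) :
    cyclicEval F n (f * g) = aeval (cshift F n) f (cyclicEval F n g) := by
  simp [cyclicEval]

lemma cyclicEval_surjective : Function.Surjective (cyclicEval F n) := by
  rw [← LinearMap.range_eq_top, eq_top_iff, ← (Pi.basisFun F (Fin n)).span_eq, Submodule.span_le]
  rintro _ ⟨j, rfl⟩
  exact ⟨X ^ (j : ℕ), by simp [cyclicEval, cshift_pow_single_zero]⟩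

end CyclicShift

section Gap

variable {F R Q : Type*} [Field F] [CommRing R] [Algebra F R] [AddCommGroup Q] [Module F Q]

/-- The kernel of `P` contains a point of every orbit of multiplication by `t`. For `R = F[X]`,
`t = X` and `P` with kernel corresponding to `U`, this says that `U` is cyclically covering. -/
def MeetsOrbits (t : R) (P : R →ₗ[F] Q) : Prop :=
  ∀ x, ∃ i : ℕ, P (t ^ i * x) = 0

/-- `P` takes values in a line and, if nonzero, vanishes on some orbit of multiplication by `t`
only at times congruent to `0` or `1` modulo `4`. Two such orbits can be delayed with respect to
each other so that they are never in the kernel simultaneously. -/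
structure IsGapped (t : R) (P : R →ₗ[F] Q) : Prop where
  isPrincipal_range : (LinearMap.range P).IsPrincipal
  exists_gap : P ≠ 0 → ∃ y, ∀ i : ℕ, P (t ^ i * y) = 0 → i % 4 < 2

lemma MeetsOrbits.comp_mulLeft {t : R} {P : R →ₗ[F] Q} (hP : MeetsOrbits t P) (f : R) :
    MeetsOrbits t (P ∘ₗ LinearMap.mulLeft F f) := fun x => by
  obtain ⟨i, hi⟩ := hP (f * x)
  exact ⟨i, by simpa [mul_left_comm] using hi⟩

lemma MeetsOrbits.exists_lt {t : R} {P : R →ₗ[F] Q} (hP : MeetsOrbits t P) {m : ℕ} (hm : 0 < m)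
    (ht : t ^ m = -1) (x : R) : ∃ i < m, P (t ^ i * x) = 0 := by
  obtain ⟨i, hi⟩ := hP x
  refine ⟨i % m, Nat.mod_lt i hm, ?_⟩
  rw [← Nat.div_add_mod i m, pow_add, pow_mul, ht] at hi
  rcases neg_one_pow_eq_or R (i / m) with h | h <;> simpa [h] using hi

lemma isGapped_zero (t : R) : IsGapped t (0 : R →ₗ[F] Q) :=
  ⟨by rw [LinearMap.range_zero]; infer_instance, fun h => absurd rfl h⟩

lemma range_le_sup_of_isCoprime {f g : R} (hfg : IsCoprime f g) (P : R →ₗ[F] Q) :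
    LinearMap.range P ≤ LinearMap.range (P ∘ₗ LinearMap.mulLeft F f) ⊔
      LinearMap.range (P ∘ₗ LinearMap.mulLeft F g) := by
  rintro _ ⟨x, rfl⟩
  obtain ⟨a, b, hab⟩ := hfg
  have hx : f * (a * x) + g * (b * x) = x := by linear_combination x * hab
  rw [← hx, map_add]
  exact Submodule.add_mem_sup ⟨a * x, rfl⟩ ⟨b * x, rfl⟩

lemma IsGapped.of_comp_mulLeft {t f : R} {P : R →ₗ[F] Q}
    (hf : IsGapped t (P ∘ₗ LinearMap.mulLeft F f))
    (hP : LinearMap.range P ≤ LinearMap.range (P ∘ₗ LinearMap.mulLeft F f)) : IsGapped t P where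
  isPrincipal_range := le_antisymm hP (LinearMap.range_comp_le_range _ _) ▸ hf.isPrincipal_range
  exists_gap h := by
    obtain ⟨y, hy⟩ := hf.exists_gap fun h0 => h <| by
      rwa [h0, LinearMap.range_zero, le_bot_iff, LinearMap.range_eq_bot] at hP
    exact ⟨f * y, fun i hi => hy i (by simpa [mul_left_comm] using hi)⟩

lemma eq_span_singleton_of_isPrincipal {L : Submodule F Q} (hL : L.IsPrincipal) {w : Q}
    (hw : w ∈ L) (hw0 : w ≠ 0) : L = F ∙ w := by
  obtain ⟨q, rfl⟩ := hL
  obtain ⟨c, rfl⟩ := Submodule.mem_span_singleton.mp hw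
  exact (Submodule.span_singleton_smul_eq (Ne.isUnit (left_ne_zero_of_smul hw0)) q).symm

lemma exists_eq_smul_of_isPrincipal_range {M : Type*} [AddCommGroup M] [Module F M]
    {P : M →ₗ[F] Q} (hP : (LinearMap.range P).IsPrincipal) :
    ∃ (φ : M →ₗ[F] F) (q : Q), ∀ x, P x = φ x • q := by
  obtain ⟨q, hq⟩ := hP
  obtain ⟨s, hs⟩ :=
    (LinearMap.toSpanSingleton F Q q).rangeRestrict.exists_rightInverse_of_surjective
      (LinearMap.range_rangeRestrict _)
  have hPq (x : M) : P x ∈ LinearMap.range (LinearMap.toSpanSingleton F Q q) := by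
    rw [LinearMap.range_toSpanSingleton, ← hq]
    exact ⟨x, rfl⟩
  refine ⟨s ∘ₗ P.codRestrict _ hPq, q, fun x => ?_⟩
  exact (congrArg Subtype.val (LinearMap.congr_fun hs ⟨P x, hPq x⟩)).symm

lemma MeetsOrbits.range_eq_range {t f g : R} {P : R →ₗ[F] Q} (hP : MeetsOrbits t P)
    (hf : IsGapped t (P ∘ₗ LinearMap.mulLeft F f)) (hg : IsGapped t (P ∘ₗ LinearMap.mulLeft F g))
    (hf0 : P ∘ₗ LinearMap.mulLeft F f ≠ 0) (hg0 : P ∘ₗ LinearMap.mulLeft F g ≠ 0) :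
    LinearMap.range (P ∘ₗ LinearMap.mulLeft F f) =
      LinearMap.range (P ∘ₗ LinearMap.mulLeft F g) := by
  obtain ⟨y, hy⟩ := hf.exists_gap hf0
  obtain ⟨z, hz⟩ := hg.exists_gap hg0
  obtain ⟨i, hi⟩ := hP (f * y + t ^ 2 * (g * z))
  set w := (P ∘ₗ LinearMap.mulLeft F f) (t ^ i * y) with hw
  have hwz : w = -(P ∘ₗ LinearMap.mulLeft F g) (t ^ (i + 2) * z) := by
    rw [eq_neg_iff_add_eq_zero, ← hi, hw, LinearMap.comp_apply, LinearMap.comp_apply, ← map_add]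
    congr 1
    simp only [LinearMap.mulLeft_apply]
    ring
  have hw0 : w ≠ 0 := fun h => by
    have h1 := hy i h
    have h2 := hz (i + 2) (neg_eq_zero.mp (hwz ▸ h))
    omega
  rw [eq_span_singleton_of_isPrincipal hf.isPrincipal_range ⟨_, rfl⟩ hw0,
    eq_span_singleton_of_isPrincipal hg.isPrincipal_range (hwz ▸ neg_mem ⟨_, rfl⟩) hw0]

lemma MeetsOrbits.isGapped_of_isCoprime {t f g : R} {P : R →ₗ[F] Q} (hP : MeetsOrbits t P)
    (hfg : IsCoprime f g) (hf : IsGapped t (P ∘ₗ LinearMap.mulLeft F f))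
    (hg : IsGapped t (P ∘ₗ LinearMap.mulLeft F g)) : IsGapped t P := by
  have hsup := range_le_sup_of_isCoprime hfg P
  by_cases hf0 : P ∘ₗ LinearMap.mulLeft F f = 0
  · rw [hf0, LinearMap.range_zero, bot_sup_eq] at hsup
    exact hg.of_comp_mulLeft hsup
  by_cases hg0 : P ∘ₗ LinearMap.mulLeft F g = 0
  · rw [hg0, LinearMap.range_zero, sup_bot_eq] at hsup
    exact hf.of_comp_mulLeft hsup
  rw [← hP.range_eq_range hf hg hf0 hg0, sup_idem] at hsup
  exact hf.of_comp_mulLeft hsup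

lemma MeetsOrbits.eq_zero_of_sq {t : R} {P : R →ₗ[F] Q} (hP : MeetsOrbits t P) {c : F}
    (hc : c ≠ 0) (ht : ∀ x, P (t ^ 2 * x) = c • P x) : P = 0 := by
  have hpow (i : ℕ) (x : R) : P (t ^ i * x) = 0 → P x = 0 ∨ P (t * x) = 0 := by
    induction i using Nat.twoStepInduction with
    | zero => simp +contextual
    | one => simp +contextual
    | more i ih _ =>
      rw [pow_add, mul_comm (t ^ i), mul_assoc, ht, smul_eq_zero_iff_right hc]
      exact ih
  have hor (x : R) : P x = 0 ∨ P (t * x) = 0 := (hP x).elim fun i => hpow i x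
  by_contra hP0
  obtain ⟨x, hx⟩ := DFunLike.ne_iff.mp hP0
  have hx : P x ≠ 0 := hx
  have htx : P (t * (t * x)) ≠ 0 := by
    rw [← mul_assoc, ← pow_two, ht]
    exact smul_ne_zero hc hx
  have h := hor (x + t * x)
  rw [mul_add, map_add, map_add, (hor x).resolve_left hx] at h
  simp [hx, htx] at h

end Gap

section FiniteField

variable {F L Q : Type*} [Field F] [Field L] [Algebra F L] [AddCommGroup Q] [Module F Q]

lemma MeetsOrbits.card_sub_one_le [Finite L] {t : L} {P : L →ₗ[F] Q} (hP : MeetsOrbits t P)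
    {m : ℕ} (hm : 0 < m) (ht : t ^ m = -1) :
    Nat.card L - 1 ≤ m * (Nat.card (LinearMap.ker P) - 1) := by
  classical
  have := Fintype.ofFinite L
  have ht0 : t ≠ 0 := by
    rintro rfl
    simp [zero_pow hm.ne'] at ht
  have hcover : (Finset.univ.erase 0 : Finset L) ⊆ (Finset.range m).biUnion fun i =>
      ((LinearMap.ker P : Set L).toFinset.erase 0).image fun y => (t ^ i)⁻¹ * y := by
    intro x hx
    obtain ⟨i, hi, hPi⟩ := hP.exists_lt hm ht x
    simp only [Finset.mem_biUnion, Finset.mem_range, Finset.mem_image]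
    exact ⟨i, hi, t ^ i * x, by simp_all, inv_mul_cancel_left₀ (pow_ne_zero i ht0) x⟩
  have hcard := (Finset.card_le_card hcover).trans
    (Finset.card_biUnion_le_card_mul _ _ _ fun i _ => Finset.card_image_le)
  simpa [Finset.card_erase_of_mem, ← Nat.card_eq_card_toFinset] using hcard

lemma exists_mul_eq_of_ne_zero [FiniteDimensional F L] {φ : L →ₗ[F] F} (hφ : φ ≠ 0)
    (ψ : L →ₗ[F] F) : ∃ y, ∀ x, φ (x * y) = ψ x := by
  have hinj : Function.Injective ((LinearMap.mul F L).flip.compr₂ φ) := by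
    refine (injective_iff_map_eq_zero _).mpr fun y hy => ?_
    by_contra hy0
    refine hφ (LinearMap.ext fun x => ?_)
    simpa [mul_comm x, mul_inv_cancel_left₀ hy0] using LinearMap.congr_fun hy (x * y⁻¹)
  obtain ⟨y, hy⟩ := (LinearMap.injective_iff_surjective_of_finrank_eq_finrank
    Subspace.dual_finrank_eq.symm).mp hinj ψ
  exact ⟨y, LinearMap.congr_fun hy⟩

lemma exists_iff_of_isPrincipal_range [FiniteDimensional F L] {P : L →ₗ[F] Q} (hP0 : P ≠ 0)
    (hP : (LinearMap.range P).IsPrincipal) (ψ : L →ₗ[F] F) :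
    ∃ y, ∀ x, P (x * y) = 0 ↔ ψ x = 0 := by
  obtain ⟨φ, q, hφ⟩ := exists_eq_smul_of_isPrincipal_range hP
  obtain ⟨x₀, hx₀⟩ := DFunLike.ne_iff.mp hP0
  have hx₀ : φ x₀ • q ≠ 0 := hφ x₀ ▸ hx₀
  have hφ0 : φ ≠ 0 := fun h => left_ne_zero_of_smul hx₀ (by simp [h])
  obtain ⟨y, hy⟩ := exists_mul_eq_of_ne_zero hφ0 ψ
  exact ⟨y, fun x => by rw [hφ, hy, smul_eq_zero_iff_left (right_ne_zero_of_smul hx₀)]⟩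

lemma two_pow_succ_dvd_card_sub_one [Finite L] (h2 : (2 : L) ≠ 0) {t : L} {n : ℕ}
    (ht : t ^ 2 ^ n = -1) : 2 ^ (n + 1) ∣ Nat.card L - 1 := by
  have := Fintype.ofFinite L
  have hneg : (-1 : L) ≠ 1 := by rwa [Ne, neg_eq_iff_add_eq_zero, one_add_one_eq_two]
  have horder : orderOf t = 2 ^ (n + 1) :=
    orderOf_eq_prime_pow (ht ▸ hneg) (by rw [pow_succ, pow_mul, ht, neg_one_sq])
  have ht0 : t ≠ 0 := fun h => by simp [h] at ht
  rw [← horder, Nat.card_eq_fintype_card]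
  exact orderOf_dvd_of_pow_eq_one (FiniteField.pow_card_sub_one_eq_one t ht0)

lemma two_pow_succ_dvd_of_irreducible [Finite F] (h2 : (2 : F) ≠ 0) {g : F[X]}
    (hg : Irreducible g) {n : ℕ} (hdvd : g ∣ X ^ 2 ^ n + 1) :
    2 ^ (n + 1) ∣ Nat.card F ^ g.natDegree - 1 := by
  have := Fact.mk hg
  let pb := AdjoinRoot.powerBasis hg.ne_zero
  have := pb.finite
  have := Module.finite_of_finite F (M := AdjoinRoot g)
  have hroot : AdjoinRoot.root g ^ 2 ^ n = -1 := by
    have h := AdjoinRoot.mk_eq_zero.mpr hdvd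
    rwa [map_add, map_pow, AdjoinRoot.mk_X, map_one, ← eq_neg_iff_add_eq_zero] at h
  have h2' : (2 : AdjoinRoot g) ≠ 0 := by
    rw [← map_ofNat (algebraMap F (AdjoinRoot g)) 2]
    exact (_root_.map_ne_zero _).mpr h2
  have hcard : Nat.card (AdjoinRoot g) = Nat.card F ^ g.natDegree := by
    rw [Module.natCard_eq_pow_finrank (K := F), pb.finrank, AdjoinRoot.powerBasis_dim]
  exact hcard ▸ two_pow_succ_dvd_card_sub_one h2' hroot

end FiniteField

section Trinomial

/-- For `e = 1, 2` and `ε = ±1` these are the irreducible factors of `(X^8 + 1)(X^4 + 1)` over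
`𝔽_3`. A root `α` satisfies `α ^ (2 * e) = ε α ^ e + 1`, a Fibonacci recurrence in `α ^ e`. -/
def fibTrinomial (ε : ZMod 3) (e : ℕ) : (ZMod 3)[X] := X ^ (2 * e) - C ε * X ^ e - 1

lemma fibTrinomial_mul_fibTrinomial_neg {ε : ZMod 3} (hε : ε ^ 2 = 1) (e : ℕ) :
    fibTrinomial ε e * fibTrinomial (-ε) e = X ^ (4 * e) + 1 := by
  have h3 : (3 : (ZMod 3)[X]) = 0 := CharP.ofNat_eq_zero _ 3
  have hC : (C ε : (ZMod 3)[X]) ^ 2 = 1 := by rw [← C_pow, hε, C_1]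
  simp only [fibTrinomial, C_neg]
  linear_combination (-X ^ (2 * e)) * hC - X ^ (2 * e) * h3

lemma isCoprime_fibTrinomial_neg {ε : ZMod 3} (hε : ε ^ 2 = 1) (e : ℕ) :
    IsCoprime (fibTrinomial ε e) (fibTrinomial (-ε) e) := by
  have h3 : (3 : (ZMod 3)[X]) = 0 := CharP.ofNat_eq_zero _ 3
  have hC : (C ε : (ZMod 3)[X]) ^ 2 = 1 := by rw [← C_pow, hε, C_1]
  refine ⟨C ε * X ^ e + 1, 1 - C ε * X ^ e, ?_⟩
  simp only [fibTrinomial, C_neg]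
  linear_combination (-2 * X ^ (2 * e)) * hC - h3

lemma degree_C_mul_X_pow_add_one_lt (ε : ZMod 3) {e : ℕ} (he : 0 < e) :
    (C ε * X ^ e + 1 : (ZMod 3)[X]).degree < (2 * e : ℕ) := by
  have hle : (C ε * X ^ e + 1 : (ZMod 3)[X]).degree ≤ e := by compute_degree!
  exact hle.trans_lt (by exact_mod_cast show e < 2 * e by omega)

lemma natDegree_fibTrinomial (ε : ZMod 3) {e : ℕ} (he : 0 < e) :
    (fibTrinomial ε e).natDegree = 2 * e := by
  rw [fibTrinomial, sub_sub]
  exact natDegree_eq_of_degree_eq_some <| by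
    rw [degree_sub_eq_left_of_degree_lt, degree_X_pow]
    simpa only [degree_X_pow] using degree_C_mul_X_pow_add_one_lt ε he

lemma monic_fibTrinomial (ε : ZMod 3) {e : ℕ} (he : 0 < e) : (fibTrinomial ε e).Monic := by
  rw [fibTrinomial, sub_sub]
  exact monic_X_pow_sub (degree_C_mul_X_pow_add_one_lt ε he)

lemma irreducible_fibTrinomial {ε : ZMod 3} (hε : ε ^ 2 = 1) {e : ℕ} (he : e = 1 ∨ e = 2) :
    Irreducible (fibTrinomial ε e) := by
  have he0 : 0 < e := by omega
  have hdeg := natDegree_fibTrinomial ε he0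
  have hmonic := monic_fibTrinomial ε he0
  obtain ⟨g, hg, hgf⟩ := WfDvdMonoid.exists_irreducible_factor
    (fun h => by rw [natDegree_eq_zero_of_isUnit h] at hdeg; omega) hmonic.ne_zero
  have hdvd : 2 ^ (e + 2) ∣ 3 ^ g.natDegree - 1 := by
    have h4e : 4 * e = 2 ^ (e + 1) := by rcases he with rfl | rfl <;> rfl
    have hgX : g ∣ X ^ 2 ^ (e + 1) + 1 :=
      h4e ▸ fibTrinomial_mul_fibTrinomial_neg hε e ▸ hgf.mul_right _
    simpa using two_pow_succ_dvd_of_irreducible (by decide) hg hgX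
  have hle : 2 * e ≤ g.natDegree := by
    have hpos := hg.natDegree_pos
    by_contra! hlt
    have : g.natDegree < 4 := by omega
    rcases he with rfl | rfl <;> interval_cases g.natDegree <;> omega
  exact (associated_of_dvd_of_natDegree_le hgf hmonic.ne_zero (hdeg.trans_le hle)).irreducible hg

lemma four_dvd_of_fib_eq_zero {ε : ZMod 3} (hε : ε ^ 2 = 1) {a : ℕ → ZMod 3} (h0 : a 0 = 0)
    (h1 : a 1 ≠ 0) (ha : ∀ j, a (j + 2) = ε * a (j + 1) + a j) {j : ℕ} (hj : a j = 0) : 4 ∣ j := by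
  have hε0 : ε ≠ 0 := by rintro rfl; simp at hε
  have h3 : (3 : ZMod 3) = 0 := rfl
  have a2 (k : ℕ) (hk : a k = 0) : a (k + 2) = ε * a (k + 1) := by rw [ha, hk, add_zero]
  have a3 (k : ℕ) (hk : a k = 0) : a (k + 3) = - a (k + 1) := by
    linear_combination ha (k + 1) + ε * a2 k hk + a (k + 1) * hε + a (k + 1) * h3
  have a4 (k : ℕ) (hk : a k = 0) : a (k + 4) = 0 := by
    linear_combination ha (k + 2) + ε * a3 k hk + a2 k hk
  have a5 (k : ℕ) (hk : a k = 0) : a (k + 5) = - a (k + 1) := by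
    linear_combination ha (k + 3) + ε * a4 k hk + a3 k hk
  have hzero (q : ℕ) : a (4 * q) = 0 ∧ a (4 * q + 1) ≠ 0 := by
    induction q with
    | zero => exact ⟨h0, h1⟩
    | succ q ih => exact ⟨a4 _ ih.1, by rw [mul_add_one, a5 _ ih.1]; exact neg_ne_zero.mpr ih.2⟩
  obtain ⟨hq0, hq1⟩ := hzero (j / 4)
  rw [← Nat.div_add_mod j 4] at hj
  have : j % 4 < 4 := Nat.mod_lt j (by norm_num)
  rw [Nat.dvd_iff_mod_eq_zero]
  interval_cases j % 4
  · rfl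
  · exact absurd hj hq1
  · exact absurd (a2 _ hq0 ▸ hj) (mul_ne_zero hε0 hq1)
  · exact absurd (a3 _ hq0 ▸ hj) (neg_ne_zero.mpr hq1)

variable {L Q : Type*} [Field L] [Algebra (ZMod 3) L] [AddCommGroup Q] [Module (ZMod 3) Q]

lemma pow_two_mul_eq {ε : ZMod 3} {e : ℕ} {t : L} (ht : aeval t (fibTrinomial ε e) = 0) :
    t ^ (2 * e) = ε • t ^ e + 1 := by
  simp only [fibTrinomial, map_sub, map_mul, map_pow, aeval_X, aeval_C, map_one] at ht
  rw [Algebra.smul_def]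
  linear_combination ht

lemma pow_four_mul_eq_neg_one {ε : ZMod 3} (hε : ε ^ 2 = 1) {e : ℕ} {t : L}
    (ht : aeval t (fibTrinomial ε e) = 0) : t ^ (4 * e) = -1 := by
  have h := congrArg (aeval t) (fibTrinomial_mul_fibTrinomial_neg hε e)
  rw [map_mul, ht, zero_mul, map_add, map_pow, aeval_X, map_one] at h
  exact eq_neg_of_add_eq_zero_left h.symm

lemma exists_gap_functional (pb : PowerBasis (ZMod 3) L) {ε : ZMod 3} (hε : ε ^ 2 = 1) {e : ℕ}
    (he : e = 1 ∨ e = 2) (hdim : pb.dim = 2 * e) (hroot : aeval pb.gen (fibTrinomial ε e) = 0) :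
    ∃ ψ : L →ₗ[ZMod 3] ZMod 3, ∀ i, ψ (pb.gen ^ i) = 0 → i % 4 < 2 := by
  have he0 : 0 < e := by omega
  let ψ : L →ₗ[ZMod 3] ZMod 3 := pb.basis.constr (ZMod 3) fun i => if (i : ℕ) < e then 0 else 1
  have hψ (i : ℕ) (hi : i < 2 * e) : ψ (pb.gen ^ i) = if i < e then 0 else 1 := by
    have h := pb.basis.constr_basis (ZMod 3) (fun i => if (i : ℕ) < e then (0 : ZMod 3) else 1)
      ⟨i, hdim ▸ hi⟩
    rwa [pb.basis_eq_pow] at h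
  have hrec (j : ℕ) : ψ (pb.gen ^ (j + 2 * e)) = ε * ψ (pb.gen ^ (j + e)) + ψ (pb.gen ^ j) := by
    rw [pow_add, pow_two_mul_eq hroot, mul_add, mul_one, mul_smul_comm, ← pow_add, map_add,
      map_smul, smul_eq_mul]
  refine ⟨ψ, fun i hi => ?_⟩
  have hr : i % e < e := Nat.mod_lt i he0
  have hdvd : 4 ∣ i / e := by
    refine four_dvd_of_fib_eq_zero hε (a := fun j => ψ (pb.gen ^ (i % e + e * j))) ?_ ?_ ?_ ?_
    · simp [hψ _ (show i % e < 2 * e by omega), hr]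
    · simp [hψ _ (show i % e + e < 2 * e by omega)]
    · intro j
      simpa only [mul_add, mul_one, mul_comm 2 e, add_assoc] using hrec (i % e + e * j)
    · rwa [Nat.mod_add_div]
  rcases he with rfl | rfl <;> omega

lemma MeetsOrbits.isPrincipal_range (pb : PowerBasis (ZMod 3) L) {ε : ZMod 3} (hε : ε ^ 2 = 1)
    {e : ℕ} (he : e = 1 ∨ e = 2) (hdim : pb.dim = 2 * e)
    (hroot : aeval pb.gen (fibTrinomial ε e) = 0) {P : L →ₗ[ZMod 3] Q}
    (hP : MeetsOrbits pb.gen P) : (LinearMap.range P).IsPrincipal := by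
  have := pb.finite
  have := Module.finite_of_finite (ZMod 3) (M := L)
  have hcard := hP.card_sub_one_le (by omega) (pow_four_mul_eq_neg_one hε hroot)
  rw [Module.natCard_eq_pow_finrank (K := ZMod 3) (V := L),
    Module.natCard_eq_pow_finrank (K := ZMod 3) (V := LinearMap.ker P), pb.finrank, hdim,
    Nat.card_zmod] at hcard
  rw [← Submodule.finrank_le_one_iff_isPrincipal]
  have hrank := P.finrank_range_add_finrank_ker
  rw [pb.finrank, hdim] at hrank
  by_contra! hlt
  have hker : Module.finrank (ZMod 3) (LinearMap.ker P) ≤ 2 * e - 2 := by omega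
  have hpow := Nat.pow_le_pow_right (show 0 < 3 by norm_num) hker
  rcases he with rfl | rfl <;> norm_num at hcard hpow <;> omega

lemma MeetsOrbits.isGapped_of_powerBasis (pb : PowerBasis (ZMod 3) L) {ε : ZMod 3}
    (hε : ε ^ 2 = 1) {e : ℕ} (he : e = 1 ∨ e = 2) (hdim : pb.dim = 2 * e)
    (hroot : aeval pb.gen (fibTrinomial ε e) = 0) {P : L →ₗ[ZMod 3] Q}
    (hP : MeetsOrbits pb.gen P) : IsGapped pb.gen P where
  isPrincipal_range := hP.isPrincipal_range pb hε he hdim hroot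
  exists_gap hP0 := by
    have := pb.finite
    obtain ⟨ψ, hψ⟩ := exists_gap_functional pb hε he hdim hroot
    obtain ⟨y, hy⟩ := exists_iff_of_isPrincipal_range hP0
      (hP.isPrincipal_range pb hε he hdim hroot) ψ
    exact ⟨y, fun i hi => hψ i ((hy _).mp hi)⟩

end Trinomial

section GapForcing

variable {F Q : Type*} [Field F] [AddCommGroup Q] [Module F Q]

/-- `f` is gap forcing if every `P` that factors through `F[X]/(f)`, and whose kernel meets all
orbits of multiplication by `X`, is gapped. -/
def GapForcing (Q : Type*) [AddCommGroup Q] [Module F Q] (f : F[X]) : Prop :=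
  ∀ P : F[X] →ₗ[F] Q, (∀ g, P (f * g) = 0) → MeetsOrbits X P → IsGapped X P

lemma GapForcing.mul {f g : F[X]} (hf : GapForcing Q f) (hg : GapForcing Q g)
    (hfg : IsCoprime f g) : GapForcing Q (f * g) := fun P hP hmeet =>
  hmeet.isGapped_of_isCoprime hfg
    (hg _ (fun x => by simpa [mul_assoc] using hP x) (hmeet.comp_mulLeft f))
    (hf _ (fun x => by simpa [mul_left_comm, mul_assoc] using hP x) (hmeet.comp_mulLeft g))

lemma gapForcing_X_sq_sub_C {c : F} (hc : c ≠ 0) : GapForcing Q (X ^ 2 - C c) :=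
  fun P hP hmeet => by
    have hX (g : F[X]) : P (X ^ 2 * g) = c • P g := by
      rw [← sub_eq_zero, ← map_smul, ← map_sub, smul_eq_C_mul, ← sub_mul, hP]
    exact hmeet.eq_zero_of_sq hc hX ▸ isGapped_zero X

lemma gapForcing_of_adjoinRoot {f : F[X]} (hf : f.Monic)
    (h : ∀ P : AdjoinRoot f →ₗ[F] Q, MeetsOrbits (AdjoinRoot.root f) P →
      IsGapped (AdjoinRoot.root f) P) : GapForcing Q f := fun P hP hmeet => by
  let p : AdjoinRoot f →ₗ[F] Q := P ∘ₗ AdjoinRoot.modByMonicHom hf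
  have hp (g : F[X]) : p (AdjoinRoot.mk f g) = P g := by
    conv_rhs => rw [← modByMonic_add_div g f, map_add, hP, add_zero]
    rw [LinearMap.comp_apply, AdjoinRoot.modByMonicHom_mk]
  have hpX (i : ℕ) (g : F[X]) :
      p (AdjoinRoot.root f ^ i * AdjoinRoot.mk f g) = P (X ^ i * g) := by
    rw [← hp, map_mul (AdjoinRoot.mk f), map_pow, AdjoinRoot.mk_X]
  have hrange : LinearMap.range p = LinearMap.range P :=
    SetLike.coe_injective <| by
      rw [LinearMap.coe_range, LinearMap.coe_range, ← AdjoinRoot.mk_surjective.range_comp]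
      exact congrArg Set.range (funext hp)
  have hgap : IsGapped (AdjoinRoot.root f) p := h p fun x => by
    obtain ⟨g, rfl⟩ := AdjoinRoot.mk_surjective x
    simpa only [hpX] using hmeet g
  refine ⟨hrange ▸ hgap.isPrincipal_range, fun hP0 => ?_⟩
  obtain ⟨y, hy⟩ := hgap.exists_gap fun h0 => hP0 (LinearMap.ext fun g => by rw [← hp, h0]; rfl)
  obtain ⟨g, rfl⟩ := AdjoinRoot.mk_surjective y
  exact ⟨g, by simpa only [hpX] using hy⟩

lemma IsCyclicallyCovering.finrank_quotient_le_one {n : ℕ} [NeZero n]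
    {U : Submodule F (Fin n → F)} (hU : IsCyclicallyCovering U)
    (hX : GapForcing ((Fin n → F) ⧸ U) (X ^ n - 1 : F[X])) :
    Module.finrank F ((Fin n → F) ⧸ U) ≤ 1 := by
  have hsurj : Function.Surjective (U.mkQ ∘ₗ cyclicEval F n) :=
    U.mkQ_surjective.comp cyclicEval_surjective
  have hgap : IsGapped X (U.mkQ ∘ₗ cyclicEval F n) := by
    refine hX _ (fun g => ?_) (fun g => ?_)
    · simp [cyclicEval_mul, cshift_pow_self]
    · simpa [cyclicEval_mul] using isCyclicallyCovering_iff.mp hU (cyclicEval F n g)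
  rw [Module.finrank_le_one_iff_top_isPrincipal, ← LinearMap.range_eq_top.mpr hsurj]
  exact hgap.isPrincipal_range

end GapForcing

section Ternary

lemma gapForcing_fibTrinomial (Q : Type*) [AddCommGroup Q] [Module (ZMod 3) Q] {ε : ZMod 3}
    (hε : ε ^ 2 = 1) {e : ℕ} (he : e = 1 ∨ e = 2) : GapForcing Q (fibTrinomial ε e) := by
  have he0 : 0 < e := by omega
  have hmonic := monic_fibTrinomial ε he0
  have := Fact.mk (irreducible_fibTrinomial hε he)
  let pb := AdjoinRoot.powerBasis hmonic.ne_zero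
  have hroot : aeval pb.gen (fibTrinomial ε e) = 0 := by
    rw [AdjoinRoot.powerBasis_gen, AdjoinRoot.aeval_eq, AdjoinRoot.mk_self]
  exact gapForcing_of_adjoinRoot hmonic fun P hP =>
    MeetsOrbits.isGapped_of_powerBasis pb hε he (natDegree_fibTrinomial ε he0) hroot hP

lemma isCoprime_sub_one_add_one {R : Type*} [CommRing R] [CharP R 3] (f : R) :
    IsCoprime (f - 1) (f + 1) := by
  have h3 : (3 : R) = 0 := CharP.ofNat_eq_zero R 3
  exact ⟨1, -1, by linear_combination -h3⟩

lemma gapForcing_X_pow_four_mul_add_one (Q : Type*) [AddCommGroup Q] [Module (ZMod 3) Q] {e : ℕ}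
    (he : e = 1 ∨ e = 2) : GapForcing Q (X ^ (4 * e) + 1 : (ZMod 3)[X]) := by
  have h1 : (1 : ZMod 3) ^ 2 = 1 := one_pow 2
  rw [← fibTrinomial_mul_fibTrinomial_neg h1]
  exact (gapForcing_fibTrinomial Q h1 he).mul (gapForcing_fibTrinomial Q (by decide) he)
    (isCoprime_fibTrinomial_neg h1 e)

lemma gapForcing_X_pow_sixteen_sub_one (Q : Type*) [AddCommGroup Q] [Module (ZMod 3) Q] :
    GapForcing Q (X ^ 16 - 1 : (ZMod 3)[X]) := by
  have h2 : GapForcing Q (X ^ 2 - 1 : (ZMod 3)[X]) := by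
    simpa using gapForcing_X_sq_sub_C (Q := Q) (one_ne_zero : (1 : ZMod 3) ≠ 0)
  have h2' : GapForcing Q (X ^ 2 + 1 : (ZMod 3)[X]) := by
    simpa using gapForcing_X_sq_sub_C (Q := Q) (neg_ne_zero.mpr (one_ne_zero : (1 : ZMod 3) ≠ 0))
  have h4 : GapForcing Q (X ^ 4 - 1 : (ZMod 3)[X]) := by
    convert h2.mul h2' (isCoprime_sub_one_add_one _) using 1
    ring
  have h8 : GapForcing Q (X ^ 8 - 1 : (ZMod 3)[X]) := by
    convert h4.mul (gapForcing_X_pow_four_mul_add_one Q (.inl rfl))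
      (isCoprime_sub_one_add_one _) using 1
    ring
  convert h8.mul (gapForcing_X_pow_four_mul_add_one Q (.inr rfl))
    (isCoprime_sub_one_add_one _) using 1
  ring

lemma IsCyclicallyCovering.codim_le_one {U : Submodule (ZMod 3) (Fin 16 → ZMod 3)}
    (hU : IsCyclicallyCovering U) : 16 - Module.finrank (ZMod 3) U ≤ 1 := by
  have hle := hU.finrank_quotient_le_one (gapForcing_X_pow_sixteen_sub_one _)
  have hadd := U.finrank_quotient_add_finrank
  rw [Module.finrank_fin_fun] at hadd
  omega

end Ternary

section Fibonacci

lemma periodic_fib_zmod_three : Function.Periodic (fun k => (Nat.fib k : ZMod 3)) 8 := fun k => by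
  have h21 : (21 : ZMod 3) = 0 := rfl
  have h13 : (13 : ZMod 3) = 1 := rfl
  have hfib : Nat.fib (k + 8) = Nat.fib k * 13 + Nat.fib (k + 1) * 21 := Nat.fib_add k 7
  simp only [hfib, Nat.cast_add, Nat.cast_mul, Nat.cast_ofNat, h13, h21, mul_one, mul_zero,
    add_zero]

/-- The functional on `𝔽_3^n` whose coefficients are the Fibonacci numbers modulo `3`. Its kernel is
a cyclically covering hyperplane when `n` is divisible by the Pisano period `8` of `3`. -/
def fibFunctional (n : ℕ) : (Fin n → ZMod 3) →ₗ[ZMod 3] ZMod 3 :=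
  dotProductBilin (ZMod 3) (ZMod 3) fun j => (Nat.fib j : ZMod 3)

lemma fibFunctional_ne_zero {n : ℕ} (hn : 1 < n) : fibFunctional n ≠ 0 := fun h => by
  have h1 := LinearMap.congr_fun h (Pi.single ⟨1, hn⟩ 1)
  simp [fibFunctional] at h1

variable {n : ℕ} [NeZero n]

lemma fibFunctional_cshift_pow (hn : 8 ∣ n) (k : ℕ) (x : Fin n → ZMod 3) :
    fibFunctional n ((cshift (ZMod 3) n ^ k) x) =
      ∑ j : Fin n, (Nat.fib (j + k) : ZMod 3) * x j := by
  have hperiod : Function.Periodic (fun j => (Nat.fib j : ZMod 3)) n := by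
    obtain ⟨m, rfl⟩ := hn
    simpa only [mul_comm, Nat.cast_id] using periodic_fib_zmod_three.nat_mul m
  exact sum_mul_cshift_pow hperiod k x

lemma exists_fibFunctional_cshift_pow_eq_zero (hn : 8 ∣ n) (x : Fin n → ZMod 3) :
    ∃ i : ℕ, fibFunctional n ((cshift (ZMod 3) n ^ i) x) = 0 := by
  let a (i : ℕ) : ZMod 3 := fibFunctional n ((cshift (ZMod 3) n ^ i) x)
  have ha (i : ℕ) : a (i + 2) = a i + a (i + 1) := by
    simp only [a, fibFunctional_cshift_pow hn, ← Finset.sum_add_distrib, ← add_mul, ← add_assoc,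
      Nat.fib_add_two, Nat.cast_add]
  have hfour : ∀ b c : ZMod 3, b = 0 ∨ c = 0 ∨ b + c = 0 ∨ c + (b + c) = 0 := by decide
  rcases hfour (a 0) (a 1) with h | h | h | h
  · exact ⟨0, h⟩
  · exact ⟨1, h⟩
  · exact ⟨2, (ha 0).trans h⟩
  · exact ⟨3, (ha 1).trans (ha 0 ▸ h)⟩

lemma exists_isCyclicallyCovering_finrank_add_one (hn : 8 ∣ n) :
    ∃ U : Submodule (ZMod 3) (Fin n → ZMod 3), IsCyclicallyCovering U ∧
      Module.finrank (ZMod 3) U + 1 = n := by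
  have hn1 : 1 < n := lt_of_lt_of_le (by norm_num) (Nat.le_of_dvd (NeZero.pos n) hn)
  refine ⟨LinearMap.ker (fibFunctional n),
    isCyclicallyCovering_iff.mpr (exists_fibFunctional_cshift_pow_eq_zero hn), ?_⟩
  rw [Module.Dual.finrank_ker_add_one_of_ne_zero (fibFunctional_ne_zero hn1),
    Module.finrank_fin_fun]

end Fibonacci

/-- `h_3(16) = 1`: there exists a cyclically covering subspace of `𝔽_3^{16}` of
codimension 1, but none of codimension 2. -/
theorem stmt14 :
    hcc (ZMod 3) 16 = 1 ∧
    (∃ U : Submodule (ZMod 3) (Fin 16 → ZMod 3), IsCyclicallyCovering U ∧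
      16 - Module.finrank (ZMod 3) U = 1) ∧
    (∀ U : Submodule (ZMod 3) (Fin 16 → ZMod 3), IsCyclicallyCovering U →
      16 - Module.finrank (ZMod 3) U ≠ 2) := by
  obtain ⟨U, hU, hcodim⟩ : ∃ U : Submodule (ZMod 3) (Fin 16 → ZMod 3), IsCyclicallyCovering U ∧
      16 - Module.finrank (ZMod 3) U = 1 := by
    obtain ⟨U, hU, hdim⟩ := exists_isCyclicallyCovering_finrank_add_one (n := 16) (by norm_num)
    exact ⟨U, hU, by omega⟩
  refine ⟨?_, ⟨U, hU, hcodim⟩, fun V hV h => ?_⟩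
  · refine IsGreatest.csSup_eq ⟨⟨U, hU, hcodim⟩, ?_⟩
    rintro k ⟨V, hV, rfl⟩
    exact hV.codim_le_one
  · have := hV.codim_le_one
    omega
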